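/- Let F be a finite field and let B₁,…,B_k ∈ F^{m×n} be a linearly independent family of matrices generating a matrix rank-metric code C = span_F{B₁,…,B_k} such that every nonzero M ∈ C has rank(M) = n. Then C is column-nondegenerate (equivalently, the column-system slices X₁,…,X_n are linearly independent), and every nonzero element X of the associated column-system S = span_F{X₁,…,X_n} has rank(X) = k. -/

import Mathlib

open Matrix

section Defs

variable {K : Type*} [Field K]

/-- The row space of a matrix: the span of its rows in `K^b`. -/
noncomputable def rowSpace {a b : ℕ} (M : Matrix (Fin a) (Fin b) K) :
    Submodule K (Fin b → K) :=
  Submodule.span K (Set.range fun i => M i)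

/-- The column space of a matrix: the span of its columns in `K^a`. -/
noncomputable def colSpace {a b : ℕ} (M : Matrix (Fin a) (Fin b) K) :
    Submodule K (Fin a → K) :=
  Submodule.span K (Set.range fun j i => M i j)

/-- `Sc S U = {X ∈ S : colsp(X) ⊆ U}`, a subspace of the matrix space. -/
noncomputable def Sc {a b : ℕ} (S : Submodule K (Matrix (Fin a) (Fin b) K))
    (U : Submodule K (Fin a → K)) : Submodule K (Matrix (Fin a) (Fin b) K) where
  carrier := {X | X ∈ S ∧ colSpace X ≤ U}
  add_mem' := by
    rintro X Y ⟨hXS, hXU⟩ ⟨hYS, hYU⟩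
    refine ⟨S.add_mem hXS hYS, ?_⟩
    rw [colSpace, Submodule.span_le]
    rintro v ⟨j, rfl⟩
    have hx : (fun i => X i j) ∈ U := hXU (Submodule.subset_span ⟨j, rfl⟩)
    have hy : (fun i => Y i j) ∈ U := hYU (Submodule.subset_span ⟨j, rfl⟩)
    exact U.add_mem hx hy
  zero_mem' := by
    refine ⟨S.zero_mem, ?_⟩
    rw [colSpace, Submodule.span_le]
    rintro v ⟨j, rfl⟩
    exact U.zero_mem
  smul_mem' := by
    rintro c X ⟨hXS, hXU⟩
    refine ⟨S.smul_mem c hXS, ?_⟩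
    rw [colSpace, Submodule.span_le]
    rintro v ⟨j, rfl⟩
    exact U.smul_mem c (hXU (Submodule.subset_span ⟨j, rfl⟩))

/-- `Sr S U = {X ∈ S : rowsp(X) ⊆ U}`, a subspace of the matrix space. -/
noncomputable def Sr {a b : ℕ} (S : Submodule K (Matrix (Fin a) (Fin b) K))
    (U : Submodule K (Fin b → K)) : Submodule K (Matrix (Fin a) (Fin b) K) where
  carrier := {X | X ∈ S ∧ rowSpace X ≤ U}
  add_mem' := by
    rintro X Y ⟨hXS, hXU⟩ ⟨hYS, hYU⟩
    refine ⟨S.add_mem hXS hYS, ?_⟩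
    rw [rowSpace, Submodule.span_le]
    rintro v ⟨i, rfl⟩
    have hx : X i ∈ U := hXU (Submodule.subset_span ⟨i, rfl⟩)
    have hy : Y i ∈ U := hYU (Submodule.subset_span ⟨i, rfl⟩)
    exact U.add_mem hx hy
  zero_mem' := by
    refine ⟨S.zero_mem, ?_⟩
    rw [rowSpace, Submodule.span_le]
    rintro v ⟨i, rfl⟩
    exact U.zero_mem
  smul_mem' := by
    rintro c X ⟨hXS, hXU⟩
    refine ⟨S.smul_mem c hXS, ?_⟩
    rw [rowSpace, Submodule.span_le]
    rintro v ⟨i, rfl⟩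
    exact U.smul_mem c (hXU (Submodule.subset_span ⟨i, rfl⟩))

/-- Row support of a set of matrices: the sum of the row spaces of its elements. -/
noncomputable def rowSupport {a b : ℕ} (D : Submodule K (Matrix (Fin a) (Fin b) K)) :
    Submodule K (Fin b → K) :=
  ⨆ M ∈ D, rowSpace M

/-- Column support of a set of matrices: the sum of the column spaces of its elements. -/
noncomputable def colSupport {a b : ℕ} (D : Submodule K (Matrix (Fin a) (Fin b) K)) :
    Submodule K (Fin a → K) :=
  ⨆ M ∈ D, colSpace M

/-- The hyperplane `u^⊥ = {v : ∑ i, u i * v i = 0}`. -/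
noncomputable def perp {a : ℕ} (u : Fin a → K) : Submodule K (Fin a → K) where
  carrier := {v | ∑ i, u i * v i = 0}
  add_mem' := by
    intro v w hv hw
    simp only [Set.mem_setOf_eq, Pi.add_apply, mul_add, Finset.sum_add_distrib] at *
    simp [hv, hw]
  zero_mem' := by simp
  smul_mem' := by
    intro c v hv
    simp only [Set.mem_setOf_eq, Pi.smul_apply, smul_eq_mul] at *
    have : ∑ i, u i * (c * v i) = c * ∑ i, u i * v i := by
      rw [Finset.mul_sum]; congr 1; ext i; ring
    simp [this, hv]

/-- The orthogonal complement `U^⊥ = {v : ∀ u ∈ U, ∑ i, u i * v i = 0}`. -/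
noncomputable def perpSub {a : ℕ} (U : Submodule K (Fin a → K)) : Submodule K (Fin a → K) :=
  ⨅ u ∈ U, perp u

/-- The slices of the column-system: `(X l) i j = (B i) j l`. -/
def colSlices {m n k : ℕ} (B : Fin k → Matrix (Fin m) (Fin n) K) :
    Fin n → Matrix (Fin k) (Fin m) K :=
  fun l => Matrix.of fun i j => B i j l

/-- The slices of the row-system: `(Y j) l i = (B i) j l`. -/
def rowSlices {m n k : ℕ} (B : Fin k → Matrix (Fin m) (Fin n) K) :
    Fin m → Matrix (Fin n) (Fin k) K :=
  fun j => Matrix.of fun l i => B i j l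

/-- The linear map `u ↦ ∑ i, u i • B i` (i.e. `u ↦ m₁(T,u)`). -/
noncomputable def combMap {m n k : ℕ} (B : Fin k → Matrix (Fin m) (Fin n) K) :
    (Fin k → K) →ₗ[K] Matrix (Fin m) (Fin n) K where
  toFun u := ∑ i, u i • B i
  map_add' := by intro u v; simp [add_smul, Finset.sum_add_distrib]
  map_smul' := by intro c u; simp [smul_smul, Finset.smul_sum]

/-- The `t`-th row-generalized rank weight. -/
noncomputable def dRow {a b : ℕ} (C : Submodule K (Matrix (Fin a) (Fin b) K)) (t : ℕ) : ℕ :=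
  sInf {r | ∃ D : Submodule K (Matrix (Fin a) (Fin b) K),
    D ≤ C ∧ Module.finrank K D = t ∧ Module.finrank K (rowSupport D) = r}

/-- The `t`-th column-generalized rank weight. -/
noncomputable def dCol {a b : ℕ} (C : Submodule K (Matrix (Fin a) (Fin b) K)) (t : ℕ) : ℕ :=
  sInf {r | ∃ D : Submodule K (Matrix (Fin a) (Fin b) K),
    D ≤ C ∧ Module.finrank K D = t ∧ Module.finrank K (colSupport D) = r}

end Defs

/-- A matrix of full column rank has no nonzero vector in its kernel. -/
theorem Matrix.mulVec_injective_of_rank_eq {K : Type*} [Field K] {a b : ℕ}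
    {M : Matrix (Fin a) (Fin b) K} (h : M.rank = b) : Function.Injective M.mulVec := by
  rw [Matrix.mulVec_injective_iff, linearIndependent_iff_card_eq_finrank_span,
    Set.finrank, ← Matrix.rank_eq_finrank_span_cols, h, Fintype.card_fin]

/-- Both contractions of the tensor of `B` along its first and third modes agree. -/
theorem vecMul_sum_colSlices {K : Type*} [Field K] {m n k : ℕ}
    (B : Fin k → Matrix (Fin m) (Fin n) K) (u : Fin k → K) (v : Fin n → K) :
    u ᵥ* (∑ l, v l • colSlices B l) = (∑ i, u i • B i) *ᵥ v := by
  ext j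
  simp only [Matrix.vecMul, Matrix.mulVec, dotProduct, Matrix.sum_apply, Matrix.smul_apply,
    colSlices, Matrix.of_apply, smul_eq_mul, Finset.mul_sum, Finset.sum_mul]
  rw [Finset.sum_comm]
  exact Finset.sum_congr rfl fun _ _ => Finset.sum_congr rfl fun _ _ => by ring

/-- If every nonzero codeword of `C = span{B₁,…,B_k}` has rank `n`, then `C`
is column-nondegenerate (equivalently, the slices `X₁,…,X_n` are linearly independent) and
every nonzero element of the associated column-system `S` has rank `k`. -/
theorem stmt16 {F : Type*} [Field F] [Fintype F] {m n k : ℕ}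
    (hm : 0 < m) (hn : 0 < n) (hk : 0 < k)
    (B : Fin k → Matrix (Fin m) (Fin n) F) (hB : LinearIndependent F B)
    (C : Submodule F (Matrix (Fin m) (Fin n) F))
    (hC : C = Submodule.span F (Set.range B))
    (hrank : ∀ M ∈ C, M ≠ 0 → M.rank = n)
    (S : Submodule F (Matrix (Fin k) (Fin m) F))
    (hS : S = Submodule.span F (Set.range (colSlices B))) :
    rowSupport C = ⊤ ∧ LinearIndependent F (colSlices B) ∧
      ∀ X ∈ S, X ≠ 0 → X.rank = k := by
  subst hC hS
  have mulVec_eq_zero : ∀ u : Fin k → F, u ≠ 0 → ∀ v : Fin n → F,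
      (∑ i, u i • B i) *ᵥ v = 0 → v = 0 := by
    intro u hu v hv
    refine Matrix.mulVec_injective_of_rank_eq (hrank (∑ i, u i • B i) ?_ fun h => hu ?_)
      (hv.trans (Matrix.mulVec_zero _).symm)
    · exact (Submodule.mem_span_range_iff_exists_fun F).2 ⟨u, rfl⟩
    · exact funext (Fintype.linearIndependent_iff.1 hB u h)
  have hmem : B ⟨0, hk⟩ ∈ Submodule.span F (Set.range B) := Submodule.subset_span ⟨_, rfl⟩
  refine ⟨?_, ?_, ?_⟩
  · refine eq_top_iff.2 (le_trans (ge_of_eq ?_) (le_iSup₂_of_le _ hmem le_rfl))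
    apply Submodule.eq_top_of_finrank_eq
    rw [Module.finrank_fin_fun]
    exact (Matrix.rank_eq_finrank_span_row _).symm.trans (hrank _ hmem (hB.ne_zero _))
  · refine Fintype.linearIndependent_iff.2 fun v hv => congrFun ?_
    refine mulVec_eq_zero (Pi.single ⟨0, hk⟩ 1) (by simp) v ?_
    rw [← vecMul_sum_colSlices, hv, Matrix.vecMul_zero]
  · intro X hX hX0
    obtain ⟨v, rfl⟩ := (Submodule.mem_span_range_iff_exists_fun F).1 hX
    have hrows : LinearIndependent F (∑ l, v l • colSlices B l).row := by
      rw [← Matrix.vecMul_injective_iff]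
      refine (injective_iff_map_eq_zero (Matrix.vecMulLinear (∑ l, v l • colSlices B l))).2
        fun u hu => ?_
      by_contra hu0
      have hv : v = 0 := mulVec_eq_zero u hu0 v ((vecMul_sum_colSlices B u v).symm.trans hu)
      exact hX0 (by simp [hv])
    simpa using hrows.rank_matrix
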